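/- Let k ≥ 3 be an integer and let F be a (k−1)-graph. Let S_F be the k-graph obtained from F by adding a new apex vertex v ∉ V(F), with vertex set V(F) ∪ {v} and edge set {{v} ∪ e : e ∈ E(F)}. Then π_2(S_F) = 0 if and only if F is (k−1)-partite. -/

import Mathlib

/-!
Write `r = k - 1`.

**If `F` is `r`-partite.** By averaging over pairs, a `k`-graph whose minimum `2`-degree is a
positive fraction of the maximum has at least `η n ^ k` edges (`card_edges_ge`). Erdős's theorem
(`exists_box`) then gives a large complete `k`-partite `k`-graph inside it, and this contains `S_F`:
the apex goes to the first part, the parts of `F` to the others (`exists_copy`).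

**If `F` is not `r`-partite.** It suffices to find arbitrarily large `k`-graphs of positive
`2`-degree density in which the link of every vertex is `r`-partite, as such a `k`-graph contains
no `S_F`. Give every ordered pair `(v, u)` of vertices a colour `col v u` in `Fin r`, and take as
edges the `k`-sets `e` that are rainbow: each `v ∈ e` gives distinct colours to the other elements
of `e`. The colour classes seen from `v` make its link `r`-partite (`isPartite_of_rainbow`).

The vertices are the triples in `Fin r × ℤ/3 × (𝔽₂^m ∖ 0)`; the first coordinate is the part. Write
`p → q` if the `ℤ/3`-level of `p` is one above that of `q` and their vectors have inner product `1`;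
this relation is antisymmetric. A vertex `(b, p)` gives `(a, q)` the colour `b` if `p → q`, and `a`
otherwise. Consider `k`-sets with two vertices `x`, `x'` in a part `a` and one vertex in each other
part. If every one of these other vertices sends an arc to exactly one of `x`, `x'`, and there are
no more arcs outside `{x, x'}`, the set is rainbow (`rainbow_crossSet`): a vertex of part `b ≠ a`
gives the colours `a` and `b` to `x` and `x'` in some order, and uses the other colours once each.
Since solution sets of consistent systems of three equations over `𝔽₂` have size at least `2^m / 8`
(`card_dot_system`), every pair of vertices extends to at least `(2^(m-4))^(r-1)` such sets
(`deg_rainbowEdges`), where for a pair in different parts the second vertex of part `a` is chosen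
first (`exists_opposite`). As there are at most `48 r 2^(m-4)` vertices, the density is positive.
-/

open Finset Filter

variable {α : Type*} {β : Type*}

/-- `(V, E)` is a `k`-uniform hypergraph: every edge is a `k`-element subset of `V`. -/
def IsKGraph [DecidableEq α] (k : ℕ) (V : Finset α) (E : Finset (Finset α)) : Prop :=
  ∀ e ∈ E, e ⊆ V ∧ e.card = k

/-- The degree of a vertex set `S`: the number of edges containing `S`. -/
def degS [DecidableEq α] (E : Finset (Finset α)) (S : Finset α) : ℕ :=
  (E.filter fun e => S ⊆ e).card

/-- The minimum `ℓ`-degree of a hypergraph: the minimum of `degS` over `ℓ`-subsets of `V`. -/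
noncomputable def minDeg [DecidableEq α] (ℓ : ℕ) (V : Finset α) (E : Finset (Finset α)) : ℕ :=
  sInf {d | ∃ S ⊆ V, S.card = ℓ ∧ d = degS E S}

/-- The edge set of the link of `S`: `{e \ S : S ⊆ e ∈ E}`. -/
def linkE [DecidableEq α] (E : Finset (Finset α)) (S : Finset α) : Finset (Finset α) :=
  (E.filter fun e => S ⊆ e).image fun e => e \ S

/-- The rank (1-based position) of `x` within `T` with respect to `σ`. -/
def rankIn (T : Finset α) (σ : α → ℕ) (x : α) : ℕ :=
  (T.filter fun y => σ y ≤ σ x).card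

/-- `σ` is an ordering of `V`, i.e. a bijection `V → {1, …, |V|}`. -/
def IsOrdering (V : Finset α) (σ : α → ℕ) : Prop :=
  Set.BijOn σ ↑V (Set.Icc 1 V.card)

/-- `σ` is an `ℓ`-vanishing order of the `k`-graph `(V, E)`: it is an ordering of `V` and there
is a coloring `φ` of `ℓ`-sets of vertices such that for every edge `e` and every `ℓ`-subset `X`
of `e`, `φ X` equals the set of positions that `X` occupies inside `e` under `σ`. -/
def IsVanishingOrder [DecidableEq α] (ℓ : ℕ) (V : Finset α) (E : Finset (Finset α))
    (σ : α → ℕ) : Prop :=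
  IsOrdering V σ ∧
    ∃ φ : Finset α → Finset ℕ,
      ∀ e ∈ E, ∀ X ⊆ e, X.card = ℓ → φ X = X.image (rankIn e σ)

/-- The hypergraph `(VH, EH)` contains a copy of `(VF, EF)`. -/
def ContainsCopy [DecidableEq α] [DecidableEq β] (VF : Finset α) (EF : Finset (Finset α))
    (VH : Finset β) (EH : Finset (Finset β)) : Prop :=
  ∃ f : α → β, Set.InjOn f ↑VF ∧ (∀ v ∈ VF, f v ∈ VH) ∧ ∀ e ∈ EF, e.image f ∈ EH

/-- `ex_ℓ(n, F)`: the maximum of `δ_ℓ(H)` over all `F`-free `k`-graphs `H` on `n` vertices. -/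
noncomputable def exDeg [DecidableEq α] (k ℓ n : ℕ) (VF : Finset α)
    (EF : Finset (Finset α)) : ℕ :=
  sSup {d | ∃ E : Finset (Finset (Fin n)), (∀ e ∈ E, e.card = k) ∧
    ¬ ContainsCopy VF EF (Finset.univ : Finset (Fin n)) E ∧ d = minDeg ℓ Finset.univ E}

/-- The `ℓ`-degree Turán density of the `k`-graph `F = (VF, EF)` equals `x`, i.e.
`ex_ℓ(n, F) / C(n-ℓ, k-ℓ) → x` as `n → ∞` (this limit is known to exist). -/
def HasTuranDensity [DecidableEq α] (k ℓ : ℕ) (VF : Finset α) (EF : Finset (Finset α))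
    (x : ℝ) : Prop :=
  Tendsto (fun n : ℕ => (exDeg k ℓ n VF EF : ℝ) / ((n - ℓ).choose (k - ℓ) : ℝ)) atTop (nhds x)

/-- The `t`-uniform hypergraph `(V, E)` is `t`-partite: the vertices can be split into `t`
parts so that every edge contains exactly one vertex from each part. -/
def IsPartite (t : ℕ) (V : Finset α) (E : Finset (Finset α)) : Prop :=
  ∃ P : α → Fin t, ∀ e ∈ E, ∀ i : Fin t, (e.filter fun v => P v = i).card = 1

/-! ### Linear algebra over the field with two elements -/

/-- The vector space `𝔽₂^m`. -/
abbrev Vec (m : ℕ) : Type := Fin m → ZMod 2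

theorem exists_dot_eq_one {m : ℕ} (p : Submodule (ZMod 2) (Vec m)) (x : Vec m) (hx : x ∉ p) :
    ∃ w : Vec m, w ⬝ᵥ x = 1 ∧ ∀ y ∈ p, w ⬝ᵥ y = 0 := by
  obtain ⟨f, hfx, hfp⟩ := Submodule.exists_le_ker_of_notMem hx
  have key : ∀ z, (fun i => f (Pi.single i 1)) ⬝ᵥ z = f z := by
    intro z
    conv_rhs => rw [LinearMap.pi_apply_eq_sum_univ f z]
    simp only [dotProduct, smul_eq_mul]
    refine Finset.sum_congr rfl fun i _ => ?_
    rw [mul_comm]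
    congr 2
    ext j
    simp [Pi.single_apply, eq_comm]
  refine ⟨fun i => f (Pi.single i 1), ?_, fun y hy => ?_⟩
  · rw [key]
    have h2 : ∀ a : ZMod 2, a ≠ 0 → a = 1 := by decide
    exact h2 _ hfx
  · rw [key]
    exact hfp hy

/-- A non-empty fibre of a homomorphism has as many elements as the kernel, hence at least the
average number. -/
theorem card_le_mul_card_fiber {G A : Type*} [AddCommGroup G] [AddCommGroup A] [Fintype G]
    [Fintype A] [DecidableEq A] (f : G →+ A) (w₀ : G) :
    Fintype.card G ≤ Fintype.card A * (univ.filter fun w => f w = f w₀).card := by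
  have h1 := Finset.card_eq_sum_card_fiberwise (f := f) (s := (univ : Finset G))
    (t := (univ : Finset A)) (fun _ _ => by simp)
  rw [← Finset.card_univ, h1, ← Finset.card_univ, ← smul_eq_mul]
  refine Finset.sum_le_card_nsmul _ _ _ fun a _ => ?_
  by_cases ha : ∃ g, f g = a
  · obtain ⟨g, rfl⟩ := ha
    refine Finset.card_le_card_of_injOn (fun x => x - g + w₀) ?_ ?_
    · intro x hx
      simp only [coe_filter, mem_univ, true_and, Set.mem_ofPred_eq] at hx ⊢
      simp [hx]
    · intro x _ y _ hxy
      simpa using hxy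
  · have : (univ.filter fun w => f w = a) = ∅ := by
      ext w
      simp only [mem_filter, mem_univ, true_and, notMem_empty, iff_false]
      exact fun h => ha ⟨w, h⟩
    simp [this]

/-- The system `w ⬝ x = 1`, `w ⬝ y = w ⬝ z = 0` has at least `2^m / 8` solutions, provided it is
consistent. -/
theorem card_dot_system {m : ℕ} (x y z : Vec m)
    (hx : x ∉ Submodule.span (ZMod 2) ({y, z} : Set (Vec m))) :
    2 ^ m ≤ 8 * (univ.filter fun w : Vec m => w ⬝ᵥ x = 1 ∧ w ⬝ᵥ y = 0 ∧ w ⬝ᵥ z = 0).card := by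
  obtain ⟨w₀, h1, h0⟩ := exists_dot_eq_one _ x hx
  have hy := h0 y (Submodule.subset_span (by simp))
  have hz := h0 z (Submodule.subset_span (by simp))
  let f : Vec m →+ ZMod 2 × ZMod 2 × ZMod 2 :=
    { toFun := fun w => (w ⬝ᵥ x, w ⬝ᵥ y, w ⬝ᵥ z)
      map_zero' := by simp
      map_add' := by intro a b; simp [add_dotProduct] }
  have := card_le_mul_card_fiber f w₀
  have hf : f w₀ = (1, 0, 0) := by simp [f, h1, hy, hz]
  rw [hf] at this
  simpa [f, Prod.ext_iff] using this

/-! ### The oriented graph on the levels -/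

/-- Vertices of the oriented graph `arc`: a level in `ℤ/3` together with a nonzero vector. -/
abbrev Lev (m : ℕ) : Type := ZMod 3 × {x : Vec m // x ≠ 0}

/-- `p → q` when `p` lies one level above `q` and their vectors have inner product `1`. -/
def arc {m : ℕ} (p q : Lev m) : Prop := p.1 = q.1 + 1 ∧ p.2.1 ⬝ᵥ q.2.1 = 1

theorem not_arc_of_dot {m : ℕ} {p q : Lev m} (h : p.2.1 ⬝ᵥ q.2.1 = 0) : ¬ arc p q := by
  rintro ⟨_, h1⟩
  rw [h] at h1
  exact absurd h1 (by decide)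

theorem not_arc_of_dot' {m : ℕ} {p q : Lev m} (h : p.2.1 ⬝ᵥ q.2.1 = 0) : ¬ arc q p :=
  not_arc_of_dot (by rwa [dotProduct_comm])

/-- The in-neighbours of `p` whose vectors are orthogonal to `y` and `z`. They all have the same
level, so no two of them are joined by an arc. -/
noncomputable def inNbr {m : ℕ} (p : Lev m) (y z : Vec m) : Finset (Lev m) := by
  classical
  exact univ.filter fun w => arc w p ∧ w.2.1 ⬝ᵥ y = 0 ∧ w.2.1 ⬝ᵥ z = 0

theorem mem_inNbr {m : ℕ} {p : Lev m} {y z : Vec m} {w : Lev m} :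
    w ∈ inNbr p y z ↔ arc w p ∧ w.2.1 ⬝ᵥ y = 0 ∧ w.2.1 ⬝ᵥ z = 0 := by
  simp [inNbr]

/-- Transfers a count of vectors to a count of vertices on the level `l`. -/
theorem card_vec_level {m : ℕ} (l : ZMod 3) (Q : Vec m → Prop) [DecidablePred Q]
    (hQ : ¬ Q 0) (T : Finset (Lev m)) (hT : ∀ w : Lev m, w.1 = l → Q w.2.1 → w ∈ T) :
    (univ.filter Q).card ≤ T.card := by
  classical
  have hne : ∀ w : Vec m, Q w → w ≠ 0 := by
    rintro w hw rfl
    exact hQ hw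
  have hsub : univ.filter Q ⊆ T.image fun w => w.2.1 := by
    intro w hw
    rw [mem_filter] at hw
    exact mem_image.2 ⟨(l, ⟨w, hne w hw.2⟩), hT _ rfl hw.2, rfl⟩
  exact (card_le_card hsub).trans card_image_le

theorem card_inNbr {m : ℕ} (p : Lev m) (y z : Vec m)
    (hp : p.2.1 ∉ Submodule.span (ZMod 2) ({y, z} : Set (Vec m))) :
    2 ^ m ≤ 8 * (inNbr p y z).card := by
  refine (card_dot_system _ y z hp).trans (Nat.mul_le_mul_left _ ?_)
  refine card_vec_level (p.1 + 1) _ (by simp) _ ?_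
  rintro w hw ⟨h1, h2, h3⟩
  exact mem_inNbr.2 ⟨⟨hw, h1⟩, h2, h3⟩

theorem not_arc_inNbr {m : ℕ} {p : Lev m} {y z y' z' : Vec m} {w w' : Lev m}
    (hw : w ∈ inNbr p y z) (hw' : w' ∈ inNbr p y' z') : ¬ arc w w' := by
  rintro ⟨h, _⟩
  rw [(mem_inNbr.1 hw).1.1, (mem_inNbr.1 hw').1.1] at h
  generalize p.1 = a at h
  revert a; decide

theorem not_arc_of_arc {m : ℕ} {p q : Lev m} (h : arc p q) : ¬ arc q p := by
  rintro ⟨h1, _⟩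
  rw [h.1] at h1
  generalize q.1 = a at h1
  revert a; decide

theorem arc_irrefl {m : ℕ} (p : Lev m) : ¬ arc p p := fun h => not_arc_of_arc h h

/-- Two distinct vertices `x`, `y` are distinguished by a positive proportion of all vertices:
many `w`, pairwise not joined, send an arc to exactly one of `x`, `y` and receive none. -/
theorem exists_separating {m : ℕ} (x y : Lev m) (hxy : x ≠ y) :
    ∃ W : Finset (Lev m), 2 ^ m ≤ 8 * W.card ∧ (∀ w ∈ W, ∀ w' ∈ W, ¬ arc w w') ∧
      ∀ w ∈ W, ¬ arc x w ∧ ¬ arc y w ∧ ((arc w x ∧ ¬ arc w y) ∨ (¬ arc w x ∧ arc w y)) := by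
  by_cases hv : x.2.1 = y.2.1
  · have hl : x.1 ≠ y.1 := fun h => hxy (Prod.ext h (Subtype.ext hv))
    have hspan : ∀ p : Lev m, p.2.1 ∉ Submodule.span (ZMod 2) ({0, 0} : Set (Vec m)) := by
      intro p
      simpa using p.2.2
    have h3 : y.1 = x.1 + 1 ∨ x.1 = y.1 + 1 := by
      revert hl
      generalize x.1 = a
      generalize y.1 = b
      revert a b; decide
    -- the in-neighbours of the lower vertex `p` are on the level of the upper vertex `q`
    have main : ∀ p q : Lev m, q.1 = p.1 + 1 → ∀ w ∈ inNbr p 0 0,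
        arc w p ∧ ¬ arc w q ∧ ¬ arc p w ∧ ¬ arc q w := by
      intro p q hpq w hw
      have hwp := (mem_inNbr.1 hw).1
      refine ⟨hwp, fun h => ?_, not_arc_of_arc hwp, fun h => ?_⟩
      · have h1 := h.1
        rw [hwp.1, hpq] at h1
        generalize p.1 = a at h1
        revert a; decide
      · have h1 := h.1
        rw [hwp.1, hpq] at h1
        generalize p.1 = a at h1
        revert a; decide
    rcases h3 with h3 | h3
    · refine ⟨inNbr x 0 0, card_inNbr _ _ _ (hspan x), fun w hw w' hw' => not_arc_inNbr hw hw',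
        fun w hw => ?_⟩
      have := main x y h3 w hw
      tauto
    · refine ⟨inNbr y 0 0, card_inNbr _ _ _ (hspan y), fun w hw w' hw' => not_arc_inNbr hw hw',
        fun w hw => ?_⟩
      have := main y x h3 w hw
      tauto
  · refine ⟨inNbr x y.2.1 y.2.1, card_inNbr _ _ _ ?_, fun w hw w' hw' => not_arc_inNbr hw hw',
      fun w hw => ?_⟩
    · rw [Submodule.mem_span_pair]
      rintro ⟨a, b, hab⟩
      rw [← add_smul] at hab
      have h2 : ∀ c : ZMod 2, c = 0 ∨ c = 1 := by decide
      rcases h2 (a + b) with h | h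
      · rw [h, zero_smul] at hab
        exact x.2.2 hab.symm
      · rw [h, one_smul] at hab
        exact hv hab.symm
    · obtain ⟨h1, h2, -⟩ := mem_inNbr.1 hw
      exact ⟨not_arc_of_arc h1, not_arc_of_dot' h2, Or.inl ⟨h1, not_arc_of_dot h2⟩⟩

/-- A positive proportion of the vertices `p` have a vector outside the span of those of `x` and
`y`, send no arc to `y`, and receive an arc from `y` exactly when `x` does not. -/
theorem exists_opposite {s : ℕ} (hs : 2 ≤ s) (x y : Lev (s + 4)) :
    ∃ X : Finset (Lev (s + 4)), 2 ^ s ≤ X.card ∧ ∀ p ∈ X,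
      p.2.1 ∉ Submodule.span (ZMod 2) ({x.2.1, y.2.1} : Set (Vec (s + 4))) ∧ ¬ arc p y ∧
      ((arc y x ∧ ¬ arc y p) ∨ (¬ arc y x ∧ arc y p)) := by
  classical
  set N := Submodule.span (ZMod 2) ({x.2.1, y.2.1} : Set (Vec (s + 4))) with hN
  have hcount : 2 ^ s ≤ (univ.filter fun w : Vec (s + 4) => w ⬝ᵥ y.2.1 = 1 ∧ w ∉ N).card := by
    have h1 := card_dot_system y.2.1 0 0 (by simpa using y.2.2)
    simp only [dotProduct_zero, and_true] at h1
    have h2 : (univ.filter fun w : Vec (s + 4) => w ∈ N).card ≤ 4 := by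
      have : (univ.filter fun w : Vec (s + 4) => w ∈ N) ⊆
          (univ : Finset (ZMod 2 × ZMod 2)).image fun c => c.1 • x.2.1 + c.2 • y.2.1 := by
        intro w hw
        simp only [mem_filter, mem_univ, true_and, hN, Submodule.mem_span_pair] at hw
        obtain ⟨a, b, h⟩ := hw
        exact mem_image.2 ⟨(a, b), mem_univ _, h⟩
      exact (card_le_card this).trans (card_image_le.trans (by decide))
    have h3 : (univ.filter fun w : Vec (s + 4) => w ⬝ᵥ y.2.1 = 1) ⊆
        (univ.filter fun w : Vec (s + 4) => w ⬝ᵥ y.2.1 = 1 ∧ w ∉ N) ∪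
          (univ.filter fun w : Vec (s + 4) => w ∈ N) := by
      intro w hw
      simp only [mem_filter, mem_univ, true_and, mem_union] at hw ⊢
      tauto
    have h4 := (card_le_card h3).trans (card_union_le _ _)
    have h5 : 2 ^ 2 ≤ 2 ^ s := Nat.pow_le_pow_right (by norm_num) hs
    rw [pow_add] at h1
    omega
  -- `p` is put on the level of `y` or one level below it
  obtain ⟨l, hl⟩ : ∃ l : ZMod 3, ∀ p : Lev (s + 4), p.1 = l → p.2.1 ⬝ᵥ y.2.1 = 1 →
      ¬ arc p y ∧ ((arc y x ∧ ¬ arc y p) ∨ (¬ arc y x ∧ arc y p)) := by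
    by_cases h : arc y x
    · refine ⟨y.1, fun p hp _ => ⟨fun h' => ?_, Or.inl ⟨h, fun h' => ?_⟩⟩⟩ <;>
      · have h1 := h'.1
        rw [hp] at h1
        generalize y.1 = a at h1
        revert a; decide
    · refine ⟨y.1 - 1, fun p hp hd => ?_⟩
      have hyp : arc y p := ⟨by rw [hp]; ring, by rwa [dotProduct_comm]⟩
      exact ⟨not_arc_of_arc hyp, Or.inr ⟨h, hyp⟩⟩
  refine ⟨univ.filter fun p => p.1 = l ∧ p.2.1 ⬝ᵥ y.2.1 = 1 ∧ p.2.1 ∉ N, ?_, ?_⟩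
  · refine hcount.trans (card_vec_level l _ (by simp) _ ?_)
    rintro w hw ⟨h1, h2⟩
    simp only [mem_filter, mem_univ, true_and]
    exact ⟨hw, h1, h2⟩
  · intro p hp
    simp only [mem_filter, mem_univ, true_and] at hp
    exact ⟨hp.2.2, hl p hp.1 hp.2.1⟩

/-! ### Hypergraphs with partite links -/

/-- `e` is rainbow for `c : W → W → C` if each `v ∈ e` gives pairwise distinct colours `c v u` to
the other elements `u` of `e`. -/
def Rainbow {W C : Type*} (c : W → W → C) (e : Finset W) : Prop :=
  ∀ v ∈ e, Set.InjOn (c v) {u | u ∈ e ∧ u ≠ v}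

open Classical in
/-- The colour that `v = (b, p)` gives to `u = (a, q)`: it is `a` by default, but `b` when `p → q`.
-/
noncomputable def col {r m : ℕ} (v u : Fin r × Lev m) : Fin r :=
  if arc v.2 u.2 then v.1 else u.1

theorem col_of_arc {r m : ℕ} {v u : Fin r × Lev m} (h : arc v.2 u.2) : col v u = v.1 := if_pos h

theorem col_of_not_arc {r m : ℕ} {v u : Fin r × Lev m} (h : ¬ arc v.2 u.2) : col v u = u.1 :=
  if_neg h

/-- The set consisting of `z` and one vertex `(b, g b)` for each `b`. If `z = (a, y)` with
`y ≠ g a`, it meets part `a` twice and every other part once. -/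
def crossSet {r m : ℕ} (z : Fin r × Lev m) (g : Fin r → Lev m) : Finset (Fin r × Lev m) :=
  insert z (univ.image fun b => (b, g b))

theorem mem_crossSet {r m : ℕ} {z : Fin r × Lev m} {g : Fin r → Lev m} {v : Fin r × Lev m} :
    v ∈ crossSet z g ↔ v = z ∨ v = (v.1, g v.1) := by
  simp only [crossSet, mem_insert, mem_image, mem_univ, true_and]
  constructor
  · rintro (h | ⟨b, rfl⟩)
    · exact Or.inl h
    · exact Or.inr rfl
  · rintro (h | h)
    · exact Or.inl h
    · exact Or.inr ⟨v.1, h.symm⟩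

/-- The configurations giving rise to the edges used in the degree estimate: each `(b, g b)` with
`b ≠ a` distinguishes the two vertices `(a, y)` and `(a, g a)` of part `a`, and there are no other
arcs except possibly between these two. -/
def Good {r m : ℕ} (a : Fin r) (y : Lev m) (g : Fin r → Lev m) : Prop :=
  y ≠ g a ∧ (∀ b, b ≠ a → ∀ b', b' ≠ a → ¬ arc (g b) (g b')) ∧
    ∀ b, b ≠ a → ¬ arc y (g b) ∧ ¬ arc (g a) (g b) ∧
      ((arc (g b) y ∧ ¬ arc (g b) (g a)) ∨ (¬ arc (g b) y ∧ arc (g b) (g a)))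

theorem card_crossSet {r m : ℕ} {a : Fin r} {y : Lev m} {g : Fin r → Lev m} (h : y ≠ g a) :
    (crossSet (a, y) g).card = r + 1 := by
  rw [crossSet, card_insert_of_notMem, card_image_of_injective, card_univ, Fintype.card_fin]
  · intro b b' hb
    exact (Prod.ext_iff.1 hb).1
  · simp only [mem_image, mem_univ, true_and, Prod.mk.injEq, not_exists, not_and]
    rintro b rfl h'
    exact h h'.symm

/-- In a good configuration, `(a, y)` and `(a, g a)` give every other vertex its default colour,
while `(b, g b)` gives the colour `b` to exactly one of these two and `a` to the other one. -/
theorem rainbow_crossSet {r m : ℕ} {a : Fin r} {y : Lev m} {g : Fin r → Lev m} (h : Good a y g) :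
    Rainbow col (crossSet (a, y) g) := by
  obtain ⟨hne, h1, h2⟩ := h
  -- the vertices of part `a` use default colours only
  have hcola : ∀ x : Lev m, (x = y ∨ x = g a) → ∀ u ∈ crossSet (a, y) g, col (a, x) u = u.1 := by
    rintro x hx ⟨b, q⟩ hu
    by_cases hb : b = a
    · subst hb
      by_cases harc : arc x q
      · exact col_of_arc harc
      · exact col_of_not_arc harc
    · rw [mem_crossSet] at hu
      rcases hu with hu | hu
      · exact absurd (Prod.ext_iff.1 hu).1 hb
      · obtain rfl : q = g b := (Prod.ext_iff.1 hu).2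
        refine col_of_not_arc ?_
        rcases hx with rfl | rfl
        exacts [(h2 b hb).1, (h2 b hb).2.1]
  -- two elements with the same first coordinate are equal, or are the two vertices of part `a`
  have hfst : ∀ u ∈ crossSet (a, y) g, ∀ u' ∈ crossSet (a, y) g, u.1 = u'.1 → u = u' ∨
      (u = (a, y) ∧ u' = (a, g a)) ∨ (u' = (a, y) ∧ u = (a, g a)) := by
    rintro ⟨b, q⟩ hu ⟨b', q'⟩ hu' hb
    obtain rfl : b = b' := hb
    simp only [mem_crossSet, Prod.mk.injEq, true_and] at hu hu' ⊢
    rcases hu with ⟨rfl, rfl⟩ | rfl <;> rcases hu' with hu' | rfl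
    · exact Or.inl hu'.2.symm
    · exact Or.inr (Or.inl ⟨⟨rfl, rfl⟩, rfl, rfl⟩)
    · obtain ⟨rfl, rfl⟩ := hu'
      exact Or.inr (Or.inr ⟨⟨rfl, rfl⟩, rfl, rfl⟩)
    · exact Or.inl rfl
  rintro ⟨b, p⟩ hv u ⟨hu, huv⟩ u' ⟨hu', huv'⟩ hc
  by_cases hb : b = a
  · subst hb
    have hp : p = y ∨ p = g b := by
      simpa [mem_crossSet] using hv
    rw [hcola p hp u hu, hcola p hp u' hu'] at hc
    rcases hfst u hu u' hu' hc with h | ⟨rfl, rfl⟩ | ⟨rfl, rfl⟩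
    · exact h
    · rcases hp with rfl | rfl
      exacts [absurd rfl huv, absurd rfl huv']
    · rcases hp with rfl | rfl
      exacts [absurd rfl huv', absurd rfl huv]
  · obtain rfl : p = g b := by
      simpa [mem_crossSet, hb] using hv
    -- outside part `a` only default colours are used, and these avoid `a` and `b`
    have hcolb : ∀ u ∈ crossSet (a, y) g, u ≠ (b, g b) → u.1 ≠ a →
        col (b, g b) u = u.1 ∧ u.1 ≠ b := by
      rintro ⟨b', q⟩ hu hub hb'
      have hb'' : b' ≠ a := hb'
      obtain rfl : q = g b' := by
        simpa [mem_crossSet, hb''] using hu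
      exact ⟨col_of_not_arc (h1 b hb b' hb'), fun h => hub (by rw [show b' = b from h])⟩
    have hina : ∀ u ∈ crossSet (a, y) g, u.1 = a → u = (a, y) ∨ u = (a, g a) := by
      rintro ⟨b', q⟩ hu hb'
      obtain rfl : b' = a := hb'
      simpa [mem_crossSet] using hu
    -- the two vertices of part `a` receive `a` and `b`, in some order
    have hab : (col (b, g b) (a, y) = b ∧ col (b, g b) (a, g a) = a) ∨
        (col (b, g b) (a, y) = a ∧ col (b, g b) (a, g a) = b) := by
      rcases (h2 b hb).2.2 with ⟨h, h'⟩ | ⟨h, h'⟩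
      · exact Or.inl ⟨col_of_arc h, col_of_not_arc h'⟩
      · exact Or.inr ⟨col_of_not_arc h, col_of_arc h'⟩
    by_cases hua : u.1 = a <;> by_cases hua' : u'.1 = a
    · rcases hina u hu hua with rfl | rfl <;> rcases hina u' hu' hua' with rfl | rfl
      · rfl
      · rcases hab with ⟨h, h'⟩ | ⟨h, h'⟩ <;> rw [h, h'] at hc
        exacts [absurd hc hb, absurd hc.symm hb]
      · rcases hab with ⟨h, h'⟩ | ⟨h, h'⟩ <;> rw [h, h'] at hc
        exacts [absurd hc.symm hb, absurd hc hb]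
      · rfl
    · obtain ⟨h3, h4⟩ := hcolb u' hu' huv' hua'
      rw [h3] at hc
      rcases hina u hu hua with rfl | rfl <;> rcases hab with ⟨h, h'⟩ | ⟨h, h'⟩
      · exact absurd (hc.symm.trans h) h4
      · exact absurd (hc.symm.trans h) hua'
      · exact absurd (hc.symm.trans h') hua'
      · exact absurd (hc.symm.trans h') h4
    · obtain ⟨h3, h4⟩ := hcolb u hu huv hua
      rw [h3] at hc
      rcases hina u' hu' hua' with rfl | rfl <;> rcases hab with ⟨h, h'⟩ | ⟨h, h'⟩
      · exact absurd (hc.trans h) h4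
      · exact absurd (hc.trans h) hua
      · exact absurd (hc.trans h') hua
      · exact absurd (hc.trans h') h4
    · rw [(hcolb u hu huv hua).1, (hcolb u' hu' huv' hua').1] at hc
      rcases hfst u hu u' hu' hc with h | ⟨rfl, -⟩ | ⟨rfl, -⟩
      · exact h
      · exact absurd rfl hua
      · exact absurd rfl hua'

theorem crossSet_injOn {r m : ℕ} (a : Fin r) (y : Lev m) :
    Set.InjOn (fun g : Fin r → Lev m => crossSet (a, y) g) {g | y ≠ g a} := by
  intro g hg g' _ h
  ext1 b
  have h1 : (b, g b) ∈ crossSet (a, y) g' := by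
    rw [← show crossSet (a, y) g = crossSet (a, y) g' from h]
    exact mem_crossSet.2 (Or.inr rfl)
  rcases mem_crossSet.1 h1 with h2 | h2
  · obtain ⟨rfl, h3⟩ := Prod.ext_iff.1 h2
    exact absurd h3.symm hg
  · exact (Prod.ext_iff.1 h2).2

open Classical in
/-- The edges of the construction: the rainbow sets of size `r + 1`. -/
noncomputable def rainbowEdges (r m : ℕ) : Finset (Finset (Fin r × Lev m)) :=
  univ.filter fun e => e.card = r + 1 ∧ Rainbow col e

theorem mem_rainbowEdges {r m : ℕ} {e : Finset (Fin r × Lev m)} :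
    e ∈ rainbowEdges r m ↔ e.card = r + 1 ∧ Rainbow col e := by
  classical
  simp [rainbowEdges]

/-- Good configurations with fixed `a`, `y` give distinct edges, so counting them bounds a degree
from below. -/
theorem card_good_le {r m : ℕ} (a : Fin r) (y : Lev m) (S : Finset (Fin r × Lev m))
    (G : Finset (Fin r → Lev m)) (hG : ∀ g ∈ G, Good a y g ∧ S ⊆ crossSet (a, y) g) :
    G.card ≤ degS (rainbowEdges r m) S := by
  refine Finset.card_le_card_of_injOn (fun g => crossSet (a, y) g) ?_ ?_
  · intro g hg
    obtain ⟨h1, h2⟩ := hG g hg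
    rw [coe_filter]
    refine ⟨?_, h2⟩
    exact mem_rainbowEdges.2 ⟨card_crossSet h1.1, rainbow_crossSet h1⟩
  · exact (crossSet_injOn a y).mono fun g hg => (hG g hg).1.1

/-- Degree of two vertices of the same part: the other vertices of the edge are chosen freely among
those separating the two. -/
theorem deg_same_part {r s : ℕ} (a : Fin r) (x y : Lev (s + 4)) (hxy : x ≠ y) :
    (2 ^ s) ^ (r - 1) ≤ degS (rainbowEdges r (s + 4)) {(a, x), (a, y)} := by
  classical
  obtain ⟨W, hW, hWW, hWxy⟩ := exists_separating x y hxy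
  have hcard : 2 ^ s ≤ W.card := by
    rw [pow_add] at hW
    omega
  let G : Finset (Fin r → Lev (s + 4)) := Fintype.piFinset fun b => if b = a then {x} else W
  refine le_trans ?_ (card_good_le a y _ G ?_)
  · rw [Fintype.card_piFinset, ← Finset.mul_prod_erase univ _ (mem_univ a), if_pos rfl,
      card_singleton, one_mul]
    calc (2 ^ s) ^ (r - 1) = ∏ b ∈ univ.erase a, 2 ^ s := by
          rw [Finset.prod_const, card_erase_of_mem (mem_univ _), card_univ, Fintype.card_fin]
      _ ≤ _ := Finset.prod_le_prod' fun b hb => by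
          rw [if_neg (ne_of_mem_erase hb)]
          exact hcard
  · intro g hg
    have hg' := Fintype.mem_piFinset.1 hg
    have hga : g a = x := by simpa using hg' a
    have hgb : ∀ b, b ≠ a → g b ∈ W := fun b hb => by simpa [hb] using hg' b
    refine ⟨⟨?_, ?_, ?_⟩, ?_⟩
    · rw [hga]; exact hxy.symm
    · intro b hb b' hb'
      exact hWW _ (hgb b hb) _ (hgb b' hb')
    · intro b hb
      have := hWxy _ (hgb b hb)
      rw [hga]
      tauto
    · intro v hv
      rw [mem_insert, mem_singleton] at hv
      rw [mem_crossSet]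
      rcases hv with rfl | rfl
      · right; simp [hga]
      · left; rfl

/-- Degree of two vertices of different parts `a`, `a'`. The edges used have a second vertex
`(a, p)` in part `a`, with `p` such that `y` distinguishes `x` and `p`; in the remaining parts,
in-neighbours of `p` orthogonal to `x` and `y` are chosen freely. -/
theorem deg_diff_part {r s : ℕ} (hs : 2 ≤ s) (a a' : Fin r) (haa : a ≠ a') (x y : Lev (s + 4))
    (hxy : ¬ arc x y) :
    (2 ^ s) ^ (r - 1) ≤ degS (rainbowEdges r (s + 4)) {(a, x), (a', y)} := by
  classical
  obtain ⟨X, hX, hXp⟩ := exists_opposite hs x y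
  let W : Lev (s + 4) → Finset (Lev (s + 4)) := fun p => inNbr p x.2.1 y.2.1
  have hW : ∀ p ∈ X, 2 ^ s ≤ (W p).card := by
    intro p hp
    have := card_inNbr p x.2.1 y.2.1 (hXp p hp).1
    rw [pow_add] at this
    change 2 ^ s ≤ (inNbr p x.2.1 y.2.1).card
    omega
  let G : Finset (Fin r → Lev (s + 4)) := X.biUnion fun p =>
    Fintype.piFinset fun b => if b = a then {p} else if b = a' then {y} else W p
  refine le_trans ?_ (card_good_le a x _ G ?_)
  · rw [Finset.card_biUnion]
    · have h1 : ∀ p ∈ X, (2 ^ s) ^ (r - 2) ≤ (Fintype.piFinset fun b : Fin r =>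
          if b = a then ({p} : Finset (Lev (s + 4))) else if b = a' then {y} else W p).card := by
        intro p hp
        rw [Fintype.card_piFinset, ← Finset.mul_prod_erase univ _ (mem_univ a), if_pos rfl,
          card_singleton, one_mul,
          ← Finset.mul_prod_erase (univ.erase a) _ (mem_erase.2 ⟨haa.symm, mem_univ a'⟩),
          if_neg haa.symm, if_pos rfl, card_singleton, one_mul]
        calc (2 ^ s) ^ (r - 2) = ∏ b ∈ (univ.erase a).erase a', 2 ^ s := by
              rw [Finset.prod_const, card_erase_of_mem (mem_erase.2 ⟨haa.symm, mem_univ a'⟩),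
                card_erase_of_mem (mem_univ _), card_univ, Fintype.card_fin, Nat.sub_sub]
          _ ≤ _ := Finset.prod_le_prod' fun b hb => by
              rw [if_neg (ne_of_mem_erase (mem_of_mem_erase hb)), if_neg (ne_of_mem_erase hb)]
              exact hW p hp
      have hr : 2 ≤ r := by
        have h1 := a.2
        have h2 := a'.2
        have h3 : (a : ℕ) ≠ a' := fun h => haa (Fin.ext h)
        omega
      calc (2 ^ s) ^ (r - 1) = 2 ^ s * (2 ^ s) ^ (r - 2) := by
            rw [← pow_succ']
            congr 1
            omega
        _ ≤ X.card * (2 ^ s) ^ (r - 2) := Nat.mul_le_mul_right _ hX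
        _ ≤ _ := by
            rw [← smul_eq_mul]
            exact Finset.card_nsmul_le_sum _ _ _ h1
    · intro p _ p' _ hpp
      rw [Function.onFun, Finset.disjoint_left]
      intro g hg hg'
      have h1 := Fintype.mem_piFinset.1 hg a
      have h2 := Fintype.mem_piFinset.1 hg' a
      simp only [if_true, mem_singleton] at h1 h2
      exact hpp (h1.symm.trans h2)
  · intro g hg
    obtain ⟨p, hp, hg⟩ := mem_biUnion.1 hg
    have hg' := Fintype.mem_piFinset.1 hg
    obtain ⟨hspan, hpy, hopp⟩ := hXp p hp
    have hga : g a = p := by simpa using hg' a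
    have hga' : g a' = y := by simpa [haa.symm] using hg' a'
    have hgb : ∀ b, b ≠ a → g b = y ∧ b = a' ∨ g b ∈ W p := fun b hb => by
      by_cases h : b = a'
      · subst h
        exact Or.inl ⟨hga', rfl⟩
      · right
        simpa [hb, h] using hg' b
    refine ⟨⟨?_, ?_, ?_⟩, ?_⟩
    · rintro rfl
      rw [hga] at hspan
      exact hspan (Submodule.subset_span (by simp))
    · intro b hb b' hb'
      rcases hgb b hb with ⟨h, -⟩ | h <;> rcases hgb b' hb' with ⟨h', -⟩ | h'
      · rw [h, h']
        exact arc_irrefl y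
      · rw [h]
        exact not_arc_of_dot' (mem_inNbr.1 h').2.2
      · rw [h']
        exact not_arc_of_dot (mem_inNbr.1 h).2.2
      · exact not_arc_inNbr h h'
    · intro b hb
      rw [hga]
      rcases hgb b hb with ⟨h, -⟩ | h
      · rw [h]
        exact ⟨hxy, hpy, hopp⟩
      · obtain ⟨h1, h2, h3⟩ := mem_inNbr.1 h
        exact ⟨not_arc_of_dot' h2, not_arc_of_arc h1, Or.inr ⟨not_arc_of_dot h2, h1⟩⟩
    · intro v hv
      rw [mem_insert, mem_singleton] at hv
      rw [mem_crossSet]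
      rcases hv with rfl | rfl
      · left; rfl
      · right; simp [hga']

/-- Every pair of vertices has large degree in the construction. For different parts the pair is
ordered so that the first vertex sends no arc to the second, which is possible as `arc` is
antisymmetric. -/
theorem deg_rainbowEdges {r s : ℕ} (hs : 2 ≤ s) (u v : Fin r × Lev (s + 4)) (huv : u ≠ v) :
    (2 ^ s) ^ (r - 1) ≤ degS (rainbowEdges r (s + 4)) {u, v} := by
  obtain ⟨a, x⟩ := u
  obtain ⟨a', y⟩ := v
  by_cases h : a = a'
  · subst h
    exact deg_same_part a x y fun h => huv (by rw [h])
  · by_cases hxy : arc x y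
    · rw [Finset.pair_comm]
      exact deg_diff_part hs a' a (Ne.symm h) y x (not_arc_of_arc hxy)
    · exact deg_diff_part hs a a' h x y hxy

/-- If a rainbow hypergraph with `r` colours contains the suspension of `F`, then `F` is
`r`-partite: the parts are the colour classes seen from the apex. -/
theorem isPartite_of_rainbow {α W : Type*} [DecidableEq α] [DecidableEq W] {r : ℕ} (V : Finset α)
    (E : Finset (Finset α)) (hF : IsKGraph r V E) (c : W → W → Fin r) (VH : Finset W)
    (EH : Finset (Finset W)) (hEH : ∀ e ∈ EH, Rainbow c e)
    (h : ContainsCopy (insert (none : Option α) (V.image some))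
      (E.image fun e => insert (none : Option α) (e.image some)) VH EH) :
    IsPartite r V E := by
  obtain ⟨f, hinj, -, hf⟩ := h
  refine ⟨fun x => c (f none) (f (some x)), fun e he i => ?_⟩
  obtain ⟨heV, hcard⟩ := hF e he
  have hr := hEH _ (hf _ (mem_image_of_mem _ he)) (f none) (mem_image_of_mem _ (mem_insert_self _ _))
  have hmem : ∀ x ∈ e, some x ∈ (↑(insert (none : Option α) (V.image some)) : Set (Option α)) := by
    intro x hx
    exact mem_insert_of_mem (mem_image_of_mem _ (heV hx))
  have hinj' : Set.InjOn (fun x => c (f none) (f (some x))) (e : Set α) := by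
    intro x hx x' hx' hxx
    have key : ∀ x ∈ e, f (some x) ∈ {u | u ∈ (insert (none : Option α) (e.image some)).image f ∧
        u ≠ f none} := by
      intro x hx
      refine ⟨mem_image_of_mem _ (mem_insert_of_mem (mem_image_of_mem _ hx)), fun h => ?_⟩
      have := hinj (hmem x hx) (mem_insert_self _ _) h
      exact absurd this (by simp)
    have h1 := hr (key x hx) (key x' hx') hxx
    have h2 := hinj (hmem x hx) (hmem x' hx') h1
    simpa using h2
  have himg : e.image (fun x => c (f none) (f (some x))) = univ := by
    rw [← Finset.card_eq_iff_eq_univ, Finset.card_image_of_injOn hinj', hcard, Fintype.card_fin]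
  obtain ⟨x, hx, hxi⟩ := mem_image.1 (himg ▸ mem_univ i)
  rw [Finset.card_eq_one]
  refine ⟨x, ?_⟩
  ext x'
  rw [mem_filter, mem_singleton]
  constructor
  · rintro ⟨h1, h2⟩
    exact hinj' h1 hx (h2.trans hxi.symm)
  · rintro rfl
    exact ⟨hx, hxi⟩

/-! ### Erdős's theorem on complete multipartite subgraphs -/

/-- The number of embeddings of `Fin t` whose image lies in `S` is a falling factorial, of order
`|S|^t`. -/
theorem card_embedding_into {V : Type*} [Fintype V] [DecidableEq V] (t : ℕ) (S : Finset V) :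
    (S.card + 1 - t) ^ t ≤ (univ.filter fun T : Fin t ↪ V => ∀ i, T i ∈ S).card := by
  refine (Nat.pow_sub_le_descFactorial _ _).trans ?_
  have h : Fintype.card (Fin t ↪ S) = S.card.descFactorial t := by
    simp [Fintype.card_embedding_eq]
  rw [← h, ← Finset.card_univ]
  refine Finset.card_le_card_of_injOn (fun T => T.trans (Function.Embedding.subtype _)) ?_ ?_
  · intro T _
    simp
  · intro T _ T' _ h
    ext i
    have := DFunLike.congr_fun h i
    simpa using this

/-- A set of `k`-tuples of positive density contains a box `A₀ × ⋯ × A_{k-1}` with all sides of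
size `t`. The induction on `k` averages over the possible first sides. -/
theorem exists_box (t k : ℕ) : ∀ ε : ℝ, 0 < ε → ∃ n₀ : ℕ, ∀ n : ℕ, n₀ ≤ n →
    ∀ R : Finset (Fin k → Fin n), ε * (n : ℝ) ^ k ≤ R.card →
      ∃ A : Fin k → (Fin t ↪ Fin n), ∀ s : Fin k → Fin t, (fun i => A i (s i)) ∈ R := by
  induction k with
  | zero =>
    intro ε hε
    refine ⟨0, fun n _ R hR => ⟨Fin.elim0, fun s => ?_⟩⟩
    have hpos : 0 < R.card := by
      have : (0 : ℝ) < R.card := lt_of_lt_of_le (by simpa using hε) hR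
      exact_mod_cast this
    obtain ⟨x, hx⟩ := Finset.card_pos.1 hpos
    convert hx
  | succ k ih =>
    intro ε hε
    obtain ⟨n₁, hn₁⟩ := ih (ε / 2 * (ε / 4) ^ t) (by positivity)
    obtain ⟨n₂, hn₂⟩ := exists_nat_gt (4 * (t : ℝ) / ε)
    refine ⟨max n₁ (n₂ + 1), fun n hn R hR => ?_⟩
    have hn0 : n₁ ≤ n := (le_max_left _ _).trans hn
    have hn2 : n₂ + 1 ≤ n := (le_max_right _ _).trans hn
    have hnpos : (0 : ℝ) < n := by
      have : 0 < n := by omega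
      exact_mod_cast this
    have htn : (t : ℝ) ≤ ε / 4 * n := by
      have h1 : (n₂ : ℝ) ≤ n := by exact_mod_cast (by omega : n₂ ≤ n)
      have h2 : 4 * (t : ℝ) / ε < n := hn₂.trans_le h1
      rw [div_lt_iff₀ hε] at h2
      linarith
    -- `nb y` is the set of first coordinates completing `y` to an element of `R`
    let nb : (Fin k → Fin n) → Finset (Fin n) :=
      fun y => univ.filter fun x => (Fin.cons x y : Fin (k + 1) → Fin n) ∈ R
    have hRsum : (R.card : ℝ) = ∑ y, ((nb y).card : ℝ) := by
      have h1 : R.card = ∑ y : Fin k → Fin n, (R.filter fun z => Fin.tail z = y).card :=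
        Finset.card_eq_sum_card_fiberwise (fun _ _ => by simp)
      rw [h1]
      push_cast
      refine Finset.sum_congr rfl fun y _ => ?_
      congr 1
      refine Finset.card_bij' (fun z _ => z 0) (fun x _ => Fin.cons x y) ?_ ?_ ?_ ?_
      · intro z hz
        rw [mem_filter] at hz
        simp only [nb, mem_filter, mem_univ, true_and]
        rw [← hz.2, Fin.cons_self_tail]
        exact hz.1
      · intro x hx
        simp only [nb, mem_filter, mem_univ, true_and] at hx
        simp [hx]
      · intro z hz
        rw [mem_filter] at hz
        rw [← hz.2, Fin.cons_self_tail]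
      · intro x _
        simp
    -- tuples `y` with many completions
    let Y : Finset (Fin k → Fin n) := univ.filter fun y => ε / 2 * n ≤ ((nb y).card : ℝ)
    have hY : ε / 2 * (n : ℝ) ^ k ≤ Y.card := by
      have h1 : ∑ y, ((nb y).card : ℝ) ≤
          ∑ y : Fin k → Fin n, (ε / 2 * n + if y ∈ Y then (n : ℝ) else 0) := by
        refine Finset.sum_le_sum fun y _ => ?_
        by_cases hy : y ∈ Y
        · rw [if_pos hy]
          have : ((nb y).card : ℝ) ≤ n := by
            have := Finset.card_le_univ (nb y)
            rw [Fintype.card_fin] at this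
            exact_mod_cast this
          have : 0 ≤ ε / 2 * n := by positivity
          linarith
        · rw [if_neg hy]
          simp only [Y, mem_filter, mem_univ, true_and, not_le] at hy
          linarith
      rw [Finset.sum_add_distrib, Finset.sum_const, Finset.sum_ite_mem, Finset.sum_const,
        Finset.univ_inter, Finset.card_univ, Fintype.card_fun, Fintype.card_fin, Fintype.card_fin,
        nsmul_eq_mul, nsmul_eq_mul, ← hRsum] at h1
      push_cast at h1
      have h2 : ε * (n : ℝ) ^ (k + 1) ≤ n ^ k * (ε / 2 * n) + Y.card * n := hR.trans h1
      have h3 : ε / 2 * (n : ℝ) ^ k * n ≤ Y.card * n := by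
        rw [pow_succ] at h2
        nlinarith
      exact le_of_mul_le_mul_right h3 hnpos
    let com : (Fin t ↪ Fin n) → Finset (Fin k → Fin n) :=
      fun T => univ.filter fun y => ∀ i, T i ∈ nb y
    have hdc : ∑ T : Fin t ↪ Fin n, (com T).card =
        ∑ y, (univ.filter fun T : Fin t ↪ Fin n => ∀ i, T i ∈ nb y).card :=
      Finset.sum_card_bipartiteAbove_eq_sum_card_bipartiteBelow
        (r := fun (T : Fin t ↪ Fin n) (y : Fin k → Fin n) => ∀ i, T i ∈ nb y)
    have hlow : ε / 2 * (n : ℝ) ^ k * (ε / 4 * n) ^ t ≤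
        ∑ T : Fin t ↪ Fin n, ((com T).card : ℝ) := by
      have h1 : ∀ y ∈ Y, (ε / 4 * n) ^ t ≤
          ((univ.filter fun T : Fin t ↪ Fin n => ∀ i, T i ∈ nb y).card : ℝ) := by
        intro y hy
        simp only [Y, mem_filter, mem_univ, true_and] at hy
        have h2 := card_embedding_into t (nb y)
        have h3 : ε / 4 * n ≤ (((nb y).card + 1 - t : ℕ) : ℝ) := by
          have h4 : (nb y).card ≤ ((nb y).card + 1 - t) + t := by omega
          have h5 : ((nb y).card : ℝ) ≤ (((nb y).card + 1 - t : ℕ) : ℝ) + t := by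
            exact_mod_cast h4
          linarith
        calc (ε / 4 * n) ^ t ≤ (((nb y).card + 1 - t : ℕ) : ℝ) ^ t :=
              pow_le_pow_left₀ (by positivity) h3 t
          _ ≤ _ := by exact_mod_cast h2
      have h6 : ∑ T : Fin t ↪ Fin n, ((com T).card : ℝ) =
          ∑ y, ((univ.filter fun T : Fin t ↪ Fin n => ∀ i, T i ∈ nb y).card : ℝ) := by
        exact_mod_cast hdc
      rw [h6]
      calc ε / 2 * (n : ℝ) ^ k * (ε / 4 * n) ^ t ≤ Y.card * (ε / 4 * n) ^ t :=
            mul_le_mul_of_nonneg_right hY (by positivity)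
        _ = Y.card • (ε / 4 * n) ^ t := by rw [nsmul_eq_mul]
        _ ≤ ∑ y ∈ Y, ((univ.filter fun T : Fin t ↪ Fin n => ∀ i, T i ∈ nb y).card : ℝ) :=
            Finset.card_nsmul_le_sum _ _ _ h1
        _ ≤ _ := Finset.sum_le_sum_of_subset_of_nonneg (subset_univ _) fun _ _ _ => by positivity
    obtain ⟨T, hT⟩ : ∃ T : Fin t ↪ Fin n, ε / 2 * (ε / 4) ^ t * (n : ℝ) ^ k ≤ (com T).card := by
      by_contra! hcon
      -- there is at least one embedding, as the sum in `hlow` is positive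
      have hne : (univ : Finset (Fin t ↪ Fin n)).Nonempty := by
        by_contra hemp
        rw [Finset.not_nonempty_iff_eq_empty] at hemp
        rw [hemp, Finset.sum_empty] at hlow
        have : 0 < ε / 2 * (n : ℝ) ^ k * (ε / 4 * n) ^ t := by positivity
        linarith
      have h1 := Finset.sum_lt_sum_of_nonempty hne fun T _ => hcon T
      rw [Finset.sum_const, nsmul_eq_mul, Finset.card_univ, Fintype.card_embedding_eq,
        Fintype.card_fin, Fintype.card_fin] at h1
      have h2 : ((n.descFactorial t : ℕ) : ℝ) ≤ (n : ℝ) ^ t := by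
        exact_mod_cast Nat.descFactorial_le_pow n t
      have h3 : (n.descFactorial t : ℝ) * (ε / 2 * (ε / 4) ^ t * (n : ℝ) ^ k) ≤
          (n : ℝ) ^ t * (ε / 2 * (ε / 4) ^ t * (n : ℝ) ^ k) :=
        mul_le_mul_of_nonneg_right h2 (by positivity)
      have h4 : (n : ℝ) ^ t * (ε / 2 * (ε / 4) ^ t * (n : ℝ) ^ k) =
          ε / 2 * (n : ℝ) ^ k * (ε / 4 * n) ^ t := by
        rw [mul_pow]; ring
      linarith
    obtain ⟨A, hA⟩ := hn₁ n hn0 (com T) hT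
    refine ⟨Fin.cons T A, fun s => ?_⟩
    have h1 := hA (Fin.tail s)
    simp only [com, nb, mem_filter, mem_univ, true_and] at h1
    convert h1 (s 0) using 1
    ext i
    refine Fin.cases ?_ (fun j => ?_) i
    · simp
    · simp [Fin.tail]

/-- A `k`-graph has at least `n (n - 1) δ₂ / k²` edges. -/
theorem card_edges_ge {k n : ℕ} (E : Finset (Finset (Fin n))) (hE : ∀ e ∈ E, e.card = k) :
    n * (n - 1) * minDeg 2 univ E ≤ k * k * E.card := by
  have hdc : ∑ e ∈ E, ((univ : Finset (Fin n)).offDiag.filter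
        fun p => ({p.1, p.2} : Finset (Fin n)) ⊆ e).card =
      ∑ p ∈ (univ : Finset (Fin n)).offDiag, (E.filter fun e => {p.1, p.2} ⊆ e).card :=
    Finset.sum_card_bipartiteAbove_eq_sum_card_bipartiteBelow
      (r := fun (e : Finset (Fin n)) (p : Fin n × Fin n) => ({p.1, p.2} : Finset (Fin n)) ⊆ e)
  have h1 : ∑ e ∈ E, ((univ : Finset (Fin n)).offDiag.filter
      fun p => ({p.1, p.2} : Finset (Fin n)) ⊆ e).card ≤ E.card • (k * k) := by
    refine Finset.sum_le_card_nsmul _ _ _ fun e he => ?_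
    rw [← hE e he, ← Finset.card_product]
    refine Finset.card_le_card fun p hp => ?_
    rw [mem_filter] at hp
    exact mem_product.2 ⟨hp.2 (by simp), hp.2 (by simp)⟩
  have h2 : (univ : Finset (Fin n)).offDiag.card • minDeg 2 univ E ≤
      ∑ p ∈ (univ : Finset (Fin n)).offDiag, (E.filter fun e => {p.1, p.2} ⊆ e).card := by
    refine Finset.card_nsmul_le_sum _ _ _ fun p hp => ?_
    rw [mem_offDiag] at hp
    exact Nat.sInf_le ⟨{p.1, p.2}, subset_univ _, Finset.card_pair hp.2.2, rfl⟩
  rw [Finset.offDiag_card, Finset.card_univ, Fintype.card_fin, smul_eq_mul] at h2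
  rw [smul_eq_mul] at h1
  rw [Nat.mul_sub, mul_one]
  calc _ ≤ _ := h2
    _ = _ := hdc.symm
    _ ≤ _ := h1
    _ = _ := by ring

/-! ### The two directions -/

theorem le_exDeg {α : Type*} [DecidableEq α] {k ℓ n d : ℕ} {VF : Finset α} {EF : Finset (Finset α)}
    (hn : ℓ ≤ n) (E : Finset (Finset (Fin n))) (hE : ∀ e ∈ E, e.card = k)
    (hfree : ¬ ContainsCopy VF EF (univ : Finset (Fin n)) E)
    (hd : ∀ S : Finset (Fin n), S.card = ℓ → d ≤ degS E S) : d ≤ exDeg k ℓ n VF EF := by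
  have hmin : d ≤ minDeg ℓ univ E := by
    obtain ⟨S, -, hS⟩ := Finset.exists_subset_card_eq
      (show ℓ ≤ (univ : Finset (Fin n)).card by simpa using hn)
    refine le_csInf ⟨_, S, subset_univ S, hS, rfl⟩ ?_
    rintro _ ⟨S, -, hS, rfl⟩
    exact hd S hS
  refine hmin.trans (le_csSup (Set.Finite.bddAbove ?_) ⟨E, hE, hfree, rfl⟩)
  refine (Set.finite_range fun E : Finset (Finset (Fin n)) => minDeg ℓ univ E).subset ?_
  rintro _ ⟨E, -, -, rfl⟩
  exact ⟨E, rfl⟩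

theorem card_lev (m : ℕ) : Fintype.card (Lev m) = 3 * (2 ^ m - 1) := by
  classical
  rw [Fintype.card_prod, ZMod.card, Fintype.card_subtype_compl, Fintype.card_fun, ZMod.card,
    Fintype.card_fin, Fintype.card_subtype_eq]

/-- If `F` is not `r`-partite, the construction bounds `ex₂(n, S_F)` from below, for the values of
`n` that are its numbers of vertices. -/
theorem exDeg_ge {α : Type*} [DecidableEq α] {r : ℕ} (hr : 1 ≤ r) (V : Finset α)
    (E : Finset (Finset α)) (hF : IsKGraph r V E) (hP : ¬ IsPartite r V E) (s : ℕ) (hs : 2 ≤ s) :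
    (2 ^ s) ^ (r - 1) ≤ exDeg (r + 1) 2 (r * (3 * (2 ^ (s + 4) - 1)))
      (insert (none : Option α) (V.image some))
      (E.image fun e => insert (none : Option α) (e.image some)) := by
  classical
  set n := r * (3 * (2 ^ (s + 4) - 1)) with hn
  have hcard : Fintype.card (Fin r × Lev (s + 4)) = n := by
    rw [Fintype.card_prod, card_lev, Fintype.card_fin]
  let φ : Fin n ≃ Fin r × Lev (s + 4) := (Fintype.equivFinOfCardEq hcard).symm
  have h2n : 2 ≤ n := by
    have h1 : 2 ^ 1 ≤ 2 ^ (s + 4) := Nat.pow_le_pow_right (by norm_num) (by omega)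
    have h2 : 1 * (3 * 1) ≤ n := Nat.mul_le_mul hr (Nat.mul_le_mul_left _ (by omega))
    omega
  let EH : Finset (Finset (Fin n)) := univ.filter fun e => e.map φ.toEmbedding ∈ rainbowEdges r (s + 4)
  have hEH : ∀ e, e ∈ EH ↔ e.map φ.toEmbedding ∈ rainbowEdges r (s + 4) := fun e => by simp [EH]
  refine le_exDeg h2n EH ?_ ?_ ?_
  · intro e he
    rw [hEH, mem_rainbowEdges, card_map] at he
    exact he.1
  · intro hcopy
    refine hP (isPartite_of_rainbow V E hF (fun v u => col (φ v) (φ u)) univ EH ?_ hcopy)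
    intro e he v hv u hu u' hu' h
    rw [hEH, mem_rainbowEdges] at he
    have hmem : ∀ u, u ∈ {u | u ∈ e ∧ u ≠ v} →
        φ u ∈ {u | u ∈ e.map φ.toEmbedding ∧ u ≠ φ v} := by
      rintro u ⟨h1, h2⟩
      exact ⟨mem_map_of_mem φ.toEmbedding h1, fun h => h2 (φ.injective h)⟩
    exact φ.injective
      (he.2 (φ v) (mem_map_of_mem φ.toEmbedding hv) (hmem u hu) (hmem u' hu') h)
  · intro S hS
    obtain ⟨u, v, huv, rfl⟩ := Finset.card_eq_two.1 hS
    refine (deg_rainbowEdges hs (φ u) (φ v) fun h => huv (φ.injective h)).trans ?_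
    refine Finset.card_le_card_of_injOn (fun e => e.map φ.symm.toEmbedding) ?_ ?_
    · intro e he
      rw [mem_coe, mem_filter] at he
      rw [mem_coe, mem_filter, hEH]
      refine ⟨?_, ?_⟩
      · have h1 : (e.map φ.symm.toEmbedding).map φ.toEmbedding = e := by
          ext x
          simp
        rw [h1]
        exact he.1
      · intro x hx
        rw [mem_map_equiv]
        refine he.2 ?_
        rw [mem_insert, mem_singleton] at hx ⊢
        rcases hx with rfl | rfl
        exacts [Or.inl rfl, Or.inr rfl]
    · intro e _ e' _ h
      exact Finset.map_injective _ h

/-- The construction has at most `48 r 2^s` vertices and minimum `2`-degree at least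
`(2^s)^(r-1)`, so along its numbers of vertices the density stays above `(48 r)^(-(r-1))`. -/
theorem partite_of_density_zero {α : Type*} [DecidableEq α] {r : ℕ} (hr : 1 ≤ r) (V : Finset α)
    (E : Finset (Finset α)) (hF : IsKGraph r V E)
    (h : HasTuranDensity (r + 1) 2 (insert (none : Option α) (V.image some))
      (E.image fun e => insert (none : Option α) (e.image some)) 0) : IsPartite r V E := by
  by_contra hP
  let N : ℕ → ℕ := fun s => r * (3 * (2 ^ (s + 4) - 1))
  have hNge : ∀ s, s ≤ N s := by
    intro s
    have h1 : s + 4 < 2 ^ (s + 4) := Nat.lt_two_pow_self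
    have h2 : 1 * (3 * (2 ^ (s + 4) - 1)) ≤ N s := Nat.mul_le_mul_right _ hr
    omega
  have hN : Tendsto N atTop atTop := tendsto_atTop_mono hNge tendsto_id
  have hlim := h.comp hN
  have hε : (0 : ℝ) < 1 / (48 * r) ^ (r - 1) := by positivity
  obtain ⟨s, hs, hs2⟩ := ((hlim.eventually (gt_mem_nhds hε)).and
    (eventually_ge_atTop (r + 2))).exists
  have hge := exDeg_ge hr V E hF hP s (by omega)
  simp only [Function.comp] at hs
  have hchoose : (N s - 2).choose (r + 1 - 2) ≤ (48 * r) ^ (r - 1) * (2 ^ s) ^ (r - 1) := by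
    have h1 : N s ≤ 48 * r * 2 ^ s := by
      have : 2 ^ (s + 4) - 1 ≤ 16 * 2 ^ s := by rw [pow_add]; omega
      calc N s ≤ r * (3 * (16 * 2 ^ s)) := Nat.mul_le_mul_left _ (Nat.mul_le_mul_left _ this)
        _ = _ := by ring
    calc (N s - 2).choose (r + 1 - 2) ≤ (N s - 2) ^ (r + 1 - 2) := Nat.choose_le_pow _ _
      _ = (N s - 2) ^ (r - 1) := by rw [show r + 1 - 2 = r - 1 by omega]
      _ ≤ (48 * r * 2 ^ s) ^ (r - 1) := Nat.pow_le_pow_left (by omega) _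
      _ = _ := mul_pow _ _ _
  have hpos : 0 < (N s - 2).choose (r + 1 - 2) := Nat.choose_pos (by have := hNge s; omega)
  rw [div_lt_iff₀ (by exact_mod_cast hpos)] at hs
  have hchoose' : (((N s - 2).choose (r + 1 - 2) : ℕ) : ℝ) ≤
      (48 * r) ^ (r - 1) * (2 ^ s) ^ (r - 1) := by exact_mod_cast hchoose
  have hge' : ((2 : ℝ) ^ s) ^ (r - 1) ≤ (exDeg (r + 1) 2 (N s)
      (insert (none : Option α) (V.image some))
      (E.image fun e => insert (none : Option α) (e.image some)) : ℝ) := by exact_mod_cast hge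
  have : (1 : ℝ) / (48 * r) ^ (r - 1) * ((N s - 2).choose (r + 1 - 2) : ℕ) ≤ (2 ^ s) ^ (r - 1) := by
    rw [div_mul_eq_mul_div, one_mul, div_le_iff₀ (by positivity)]
    linarith
  linarith

/-- A dense `(r + 1)`-graph contains the suspension of any `r`-partite `r`-graph, because it
contains a large complete `(r + 1)`-partite `(r + 1)`-graph. -/
theorem exists_copy {α : Type*} [DecidableEq α] {r : ℕ} (V : Finset α)
    (E : Finset (Finset α)) (hP : IsPartite r V E) (ε : ℝ) (hε : 0 < ε) :
    ∃ n₀ : ℕ, ∀ n, n₀ ≤ n → ∀ H : Finset (Finset (Fin n)), (∀ e ∈ H, e.card = r + 1) →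
      ε * (n : ℝ) ^ (r + 1) ≤ H.card →
      ContainsCopy (insert (none : Option α) (V.image some))
        (E.image fun e => insert (none : Option α) (e.image some)) univ H := by
  classical
  obtain ⟨P, hP⟩ := hP
  obtain ⟨n₀, hn₀⟩ := exists_box (V.card + 1) (r + 1) ε hε
  refine ⟨n₀, fun n hn H hH hcard => ?_⟩
  -- the ordered edges of `H`
  let R : Finset (Fin (r + 1) → Fin n) := univ.filter fun x => univ.image x ∈ H
  have hRH : H.card ≤ R.card := by
    have hsub : H ⊆ R.image fun x => univ.image x := by
      intro e he
      have himg : univ.image (e.orderEmbOfFin (hH e he)) = e := by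
        rw [← Finset.coe_inj, coe_image, coe_univ, Set.image_univ, Finset.range_orderEmbOfFin]
      refine mem_image.2 ⟨e.orderEmbOfFin (hH e he), ?_, himg⟩
      simp only [R, mem_filter, mem_univ, true_and]
      rw [himg]
      exact he
    exact (card_le_card hsub).trans card_image_le
  obtain ⟨A, hA⟩ := hn₀ n hn R (hcard.trans (by exact_mod_cast hRH))
  have hA' : ∀ s : Fin (r + 1) → Fin (V.card + 1), univ.image (fun i => A i (s i)) ∈ H := by
    intro s
    have := hA s
    simpa [R] using this
  -- the sides of the box are disjoint since every edge has exactly `r + 1` elements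
  have hdisj : ∀ i j a b, A i a = A j b → i = j := by
    intro i j a b hab
    by_contra hij
    let s : Fin (r + 1) → Fin (V.card + 1) := fun l => if l = i then a else b
    have h1 := hH _ (hA' s)
    have h2 : (univ.image fun l => A l (s l)).card = (univ : Finset (Fin (r + 1))).card := by
      rw [h1, card_univ, Fintype.card_fin]
    have h3 := Finset.card_image_iff.1 h2
    refine hij (h3 (by simp) (by simp) ?_)
    simp only [s, if_true]
    rw [if_neg (Ne.symm hij)]
    exact hab
  let h : α → Fin (V.card + 1) := fun x => if hx : x ∈ V then (V.equivFin ⟨x, hx⟩).castSucc else 0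
  have hinj : Set.InjOn h V := by
    intro x hx y hy hxy
    have hx' : x ∈ V := hx
    have hy' : y ∈ V := hy
    simp only [h, dif_pos hx', dif_pos hy'] at hxy
    have := V.equivFin.injective (Fin.castSucc_injective _ hxy)
    exact congrArg Subtype.val this
  let f : Option α → Fin n := fun o => o.elim (A 0 0) fun x => A (P x).succ (h x)
  refine ⟨f, ?_, fun _ _ => mem_univ _, ?_⟩
  · intro o ho o' ho' hoo
    rw [mem_coe, mem_insert, mem_image] at ho ho'
    rcases ho with rfl | ⟨x, hx, rfl⟩ <;> rcases ho' with rfl | ⟨x', hx', rfl⟩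
    · rfl
    · exact absurd (hdisj _ _ _ _ hoo) (Fin.succ_ne_zero _).symm
    · exact absurd (hdisj _ _ _ _ hoo) (Fin.succ_ne_zero _)
    · have hPP : (P x).succ = (P x').succ := hdisj _ _ _ _ hoo
      have h1 : A (P x).succ (h x) = A (P x').succ (h x') := hoo
      rw [hPP] at h1
      rw [hinj hx hx' ((A _).injective h1)]
  · intro e' he'
    obtain ⟨e, he, rfl⟩ := mem_image.1 he'
    have hw : ∀ i : Fin r, ∃ w, (e.filter fun v => P v = i) = {w} := fun i =>
      Finset.card_eq_one.1 (hP e he i)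
    choose w hw using hw
    have hwe : ∀ i, w i ∈ e ∧ P (w i) = i := by
      intro i
      have : w i ∈ e.filter fun v => P v = i := by rw [hw i]; exact mem_singleton_self _
      exact mem_filter.1 this
    have huniq : ∀ x ∈ e, w (P x) = x := by
      intro x hx
      have : x ∈ e.filter fun v => P v = P x := mem_filter.2 ⟨hx, rfl⟩
      rw [hw (P x), mem_singleton] at this
      exact this.symm
    convert hA' (Fin.cons 0 fun i => h (w i)) using 1
    ext y
    simp only [mem_image, mem_insert, mem_univ, true_and]
    constructor
    · rintro ⟨o, rfl | ⟨x, hx, rfl⟩, rfl⟩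
      · exact ⟨0, rfl⟩
      · refine ⟨(P x).succ, ?_⟩
        simp only [Fin.cons_succ, huniq x hx]
        rfl
    · rintro ⟨i, rfl⟩
      refine Fin.cases ⟨none, Or.inl rfl, rfl⟩ (fun i => ?_) i
      refine ⟨some (w i), Or.inr ⟨w i, (hwe i).1, rfl⟩, ?_⟩
      simp only [f, Option.elim_some, (hwe i).2, Fin.cons_succ]

/-- Positive minimum `2`-degree density forces positive edge density, so that `exists_copy`
applies. -/
theorem density_zero_of_partite {α : Type*} [DecidableEq α] {r : ℕ} (hr : 2 ≤ r) (V : Finset α)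
    (E : Finset (Finset α)) (hP : IsPartite r V E) :
    HasTuranDensity (r + 1) 2 (insert (none : Option α) (V.image some))
      (E.image fun e => insert (none : Option α) (e.image some)) 0 := by
  unfold HasTuranDensity
  rw [Metric.tendsto_atTop]
  intro ε hε
  -- a `2`-degree of at least `ε / 2` times the maximum gives at least `η n^(r+1)` edges
  set η : ℝ := ε / 2 / (2 ^ r * (r - 1).factorial * ((r + 1) * (r + 1))) with hη
  have hηpos : 0 < η := by positivity
  obtain ⟨n₀, hn₀⟩ := exists_copy V E hP η hηpos
  refine ⟨max n₀ (2 * r + 2), fun n hn => ?_⟩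
  have hn0 : n₀ ≤ n := (le_max_left _ _).trans hn
  have hnr : 2 * r + 2 ≤ n := (le_max_right _ _).trans hn
  set C : ℕ := (n - 2).choose (r + 1 - 2) with hC
  have hCpos : (0 : ℝ) < C := by
    have : 0 < C := Nat.choose_pos (by omega)
    exact_mod_cast this
  suffices hex : (exDeg (r + 1) 2 n (insert (none : Option α) (V.image some))
      (E.image fun e => insert (none : Option α) (e.image some)) : ℝ) ≤ ε / 2 * C by
    rw [Real.dist_eq, sub_zero, abs_of_nonneg (by positivity), div_lt_iff₀ hCpos]
    nlinarith
  have hfloor : exDeg (r + 1) 2 n (insert (none : Option α) (V.image some))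
      (E.image fun e => insert (none : Option α) (e.image some)) ≤ ⌊ε / 2 * C⌋₊ := by
    refine csSup_le' ?_
    rintro _ ⟨H, hH, hfree, rfl⟩
    by_contra! hlt
    have hδ : ε / 2 * C ≤ minDeg 2 univ H := (Nat.lt_of_floor_lt hlt).le
    refine hfree (hn₀ n hn0 H hH ?_)
    have hedges : (n : ℝ) * (n - 1) * minDeg 2 univ H ≤ (r + 1) * (r + 1) * H.card := by
      have h1 := card_edges_ge H hH
      have h2 : ((n - 1 : ℕ) : ℝ) = (n : ℝ) - 1 := by
        rw [Nat.cast_sub (by omega), Nat.cast_one]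
      rw [← h2]
      exact_mod_cast h1
    have hnr' : 2 * (r : ℝ) + 2 ≤ n := by exact_mod_cast hnr
    have hr0 : (0 : ℝ) ≤ r := Nat.cast_nonneg r
    have hn1 : (n : ℝ) / 2 ≤ n - 1 := by linarith
    have hchoose : ((n : ℝ) / 2) ^ (r - 1) ≤ (r - 1).factorial * C := by
      have h1 : ((n - 2 + 1 - (r - 1) : ℕ) ^ (r - 1) : ℝ) ≤
          (r - 1).factorial * ((n - 2).choose (r - 1) : ℕ) := by
        have h0 := Nat.pow_le_choose (α := ℝ) (r - 1) (n - 2)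
        rw [div_le_iff₀ (by positivity)] at h0
        linarith
      have h2 : (n : ℝ) / 2 ≤ ((n - 2 + 1 - (r - 1) : ℕ) : ℝ) := by
        have h3 : n ≤ 2 * (n - 2 + 1 - (r - 1)) := by omega
        have h4 : (n : ℝ) ≤ 2 * ((n - 2 + 1 - (r - 1) : ℕ) : ℝ) := by exact_mod_cast h3
        linarith
      rw [hC, show r + 1 - 2 = r - 1 by omega]
      exact (pow_le_pow_left₀ (by positivity) h2 _).trans h1
    have hpow : (n : ℝ) ^ (r + 1) = 2 ^ r * (n * (n / 2) * (n / 2) ^ (r - 1)) := by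
      obtain ⟨q, rfl⟩ : ∃ q, r = q + 1 := ⟨r - 1, by omega⟩
      rw [Nat.add_sub_cancel, div_pow]
      field_simp
      ring
    have hn_nonneg : (0 : ℝ) ≤ n := Nat.cast_nonneg n
    have hfac : (0 : ℝ) < (r - 1).factorial := by exact_mod_cast Nat.factorial_pos _
    calc η * (n : ℝ) ^ (r + 1)
        = ε / 2 * (n * (n / 2) * (n / 2) ^ (r - 1)) /
            ((r - 1).factorial * ((r + 1) * (r + 1))) := by
          rw [hpow, hη]
          field_simp
      _ ≤ ε / 2 * (n * (n - 1) * ((r - 1).factorial * C)) /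
            ((r - 1).factorial * ((r + 1) * (r + 1))) := by
          gcongr
          nlinarith
      _ = n * (n - 1) * (ε / 2 * C) / ((r + 1) * (r + 1)) := by
          field_simp
      _ ≤ n * (n - 1) * minDeg 2 univ H / ((r + 1) * (r + 1)) := by
          gcongr
          nlinarith
      _ ≤ H.card := by
          rw [div_le_iff₀ (by positivity)]
          linarith
  calc _ ≤ ((⌊ε / 2 * C⌋₊ : ℕ) : ℝ) := by exact_mod_cast hfloor
    _ ≤ _ := Nat.floor_le (by positivity)

/-- Let `k ≥ 3` and let `F` be a `(k-1)`-graph.  Let `S_F` be the `k`-graph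
obtained from `F` by adding a new apex vertex (modelled as `none : Option α`, with the original
vertices embedded via `some`) joined to every edge of `F`.  Then `π₂(S_F) = 0` iff `F` is
`(k-1)`-partite. -/
theorem stmt_19 {α : Type*} [DecidableEq α] (k : ℕ) (hk : 3 ≤ k)
    (V : Finset α) (E : Finset (Finset α)) (hF : IsKGraph (k - 1) V E) :
    HasTuranDensity k 2 (insert (none : Option α) (V.image some))
        (E.image fun e => insert (none : Option α) (e.image some)) 0
      ↔ IsPartite (k - 1) V E := by
  obtain ⟨r, rfl⟩ : ∃ r, k = r + 1 := ⟨k - 1, by omega⟩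
  rw [Nat.add_sub_cancel] at hF ⊢
  exact ⟨partite_of_density_zero (by omega) V E hF, density_zero_of_partite (by omega) V E⟩
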